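/- arXiv:1804.06735 — 9 statements merged into one kernel-verified Lean document; each statement's English description precedes it below -/
import Mathlib

section
/- Let X and Y be Hilbert spaces, A : X → Y an injective compact bounded linear operator, x† ∈ X and y = A x†. Let ᾱ > 0 and for each α ∈ (0, ᾱ] let g_α, φ_α : [0, ‖A‖²] → ℝ be continuous functions; set r_α(λ) = 1 − λ g_α(λ). Assume: (i) for every λ ∈ (0, ‖A‖²], r_α(λ) → 0 and φ_α(λ) → 0 as α → 0⁺; (ii) there exist constants γ₁, γ₂ ≥ 0 with |r_α(λ)| ≤ γ₁ and |φ_α(λ)| ≤ γ₂ for all α ∈ (0, ᾱ] and λ ∈ (0, ‖A‖²]; (iii) there exists γ* ≥ 0 with √λ·|g_α(λ)| ≤ γ*/√α for all α ∈ (0, ᾱ] and λ ∈ (0, ‖A‖²]. For x₀, v₀ ∈ X and z ∈ Y define x_α(z) = x₀ − g_α(A*A)(A*A x₀) + φ_α(A*A) v₀ + g_α(A*A)(A* z), the operator functions being given by continuous functional calculus of the positive selfadjoint operator A*A. Then for every parameter choice δ ↦ α(δ) ∈ (0, ᾱ] satisfying α(δ) → 0 and δ²/α(δ) → 0 as δ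 → 0⁺, and every family of data y^δ ∈ Y with ‖y^δ − y‖ ≤ δ, one has ‖x_{α(δ)}(y^δ) − x†‖ → 0 as δ → 0⁺. -/
/-!
Write `T = A*A` and `r_α(λ) = 1 - λ g_α(λ)`. The functional calculus gives the error splitting
`x_α(z) - x† = r_α(T) (x₀ - x†) + φ_α(T) v₀ + g_α(T) A* (z - A x†)`.

The first two terms tend to zero because the operators `r_α(T)` and `φ_α(T)` are uniformly bounded
and tend to zero pointwise on the eigenvectors of `T`, on which `f(T)` acts as multiplication by
`f(λ)` (`cfc_apply_of_eigen`). Since `T` is compact and selfadjoint, its eigenvectors span a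
dense subspace, and since `A` is injective all its eigenvalues lie in `(0, ‖A‖²]`
(`tendsto_of_tendsto_eigen`).

The data error is controlled by the C*-identity
`‖g(T) A*‖² = ‖g(T) T g(T)‖ ≤ sup λ g(λ)² ≤ γ*² / α` (`norm_cfc_comp_adjoint_le`), so the last
term is at most `γ* δ / √α(δ)`, which tends to zero.

Bounds assumed on `(0, ‖A‖²]` extend to `[0, ‖A‖²]`, which contains the spectrum of `T`, by
continuity (`le_on_Icc_of_le_on_Ioc`).
-/

open Set Filter Topology

variable {X Y : Type*} [NormedAddCommGroup X] [InnerProductSpace ℂ X] [CompleteSpace X]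
  [NormedAddCommGroup Y] [InnerProductSpace ℂ Y] [CompleteSpace Y]

/-- The positive selfadjoint operator `A*A`. -/
noncomputable def opAA (A : X →L[ℂ] Y) : X →L[ℂ] X :=
  (ContinuousLinearMap.adjoint A).comp A

/-- The regularized approximate solution
`x_α(z) = x₀ − g_α(A*A)(A*A x₀) + φ_α(A*A) v₀ + g_α(A*A)(A* z)`, the operator functions
being given by the continuous functional calculus of `A*A`. -/
noncomputable def regSol (A : X →L[ℂ] Y) (g φ : ℝ → ℝ) (x₀ v₀ : X) (z : Y) : X :=
  x₀ - cfc g (opAA A) (opAA A x₀) + cfc φ (opAA A) v₀ +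
    cfc g (opAA A) ((ContinuousLinearMap.adjoint A) z)

lemma isPositive_opAA (A : X →L[ℂ] Y) : (opAA A).IsPositive :=
  ContinuousLinearMap.isPositive_adjoint_comp_self A

lemma isSelfAdjoint_opAA (A : X →L[ℂ] Y) : IsSelfAdjoint (opAA A) :=
  (isPositive_opAA A).isSelfAdjoint

lemma spectrum_opAA_subset [Nontrivial X] (A : X →L[ℂ] Y) :
    spectrum ℝ (opAA A) ⊆ Icc 0 (‖A‖ ^ 2) := by
  intro t ht
  refine ⟨spectrum_nonneg_of_nonneg
    ((ContinuousLinearMap.nonneg_iff_isPositive _).2 (isPositive_opAA A)) ht, ?_⟩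
  have h1 := spectrum.norm_le_norm_of_mem ht
  have h2 : ‖opAA A‖ = ‖A‖ * ‖A‖ := ContinuousLinearMap.norm_adjoint_comp_self A
  rw [h2, ← sq] at h1
  exact (le_abs_self t).trans h1

lemma aeval_apply_of_eigen (T : X →L[ℂ] X) {t : ℝ} {v : X} (hv : T v = (t : ℂ) • v)
    (p : Polynomial ℝ) : Polynomial.aeval T p v = ((p.eval t : ℝ) : ℂ) • v := by
  have hpow : ∀ n : ℕ, (T ^ n) v = ((t : ℂ) ^ n) • v := by
    intro n
    induction n with
    | zero => simp
    | succ n ih =>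
      rw [pow_succ, mul_apply_eq_comp, hv, map_smul, ih, smul_smul, pow_succ, mul_comm]
  induction p using Polynomial.induction_on' with
  | add p q hp hq =>
    rw [map_add, add_apply, hp, hq, Polynomial.eval_add, Complex.ofReal_add,
      add_smul]
  | monomial n a =>
    rw [Polynomial.aeval_monomial, Polynomial.eval_monomial, ← Algebra.smul_def,
      smul_apply, hpow]
    push_cast
    rw [mul_smul, Complex.coe_smul]

/-- If `T v = t v`, then `f(T) v = f(t) v`: true for polynomials, hence for continuous `f` by
Weierstrass approximation. -/
lemma cfc_apply_of_eigen (T : X →L[ℂ] X) (hT : IsSelfAdjoint T) {b : ℝ}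
    (hspec : spectrum ℝ T ⊆ Icc 0 b) {f : ℝ → ℝ} (hf : ContinuousOn f (Icc 0 b))
    {t : ℝ} (ht : t ∈ Icc 0 b) {v : X} (hv : T v = (t : ℂ) • v) :
    cfc f T v = ((f t : ℝ) : ℂ) • v := by
  rw [← sub_eq_zero, ← norm_eq_zero]
  refine le_antisymm (le_of_forall_pos_le_add fun ε hε => ?_) (norm_nonneg _)
  set η : ℝ := ε / (2 * (‖v‖ + 1)) with hη
  have hη0 : 0 < η := by positivity
  obtain ⟨p, hp⟩ := exists_polynomial_near_of_continuousOn 0 b f hf η hη0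
  have hpT : cfc p.eval T v = ((p.eval t : ℝ) : ℂ) • v := by
    rw [cfc_polynomial p T hT, aeval_apply_of_eigen T hv p]
  have h1 : ‖cfc f T - cfc p.eval T‖ ≤ η := by
    rw [← cfc_sub f p.eval T (hf.mono hspec) (by fun_prop)]
    refine norm_cfc_le hη0.le fun x hx => ?_
    rw [Real.norm_eq_abs, abs_sub_comm]
    exact (hp x (hspec hx)).le
  have h2 : cfc f T v - ((f t : ℝ) : ℂ) • v
      = (cfc f T - cfc p.eval T) v + ((p.eval t - f t : ℝ) : ℂ) • v := by
    rw [sub_apply, hpT]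
    push_cast
    rw [sub_smul]
    abel
  have h3 : ‖((p.eval t - f t : ℝ) : ℂ) • v‖ ≤ η * ‖v‖ := by
    rw [norm_smul, Complex.norm_real]
    exact mul_le_mul_of_nonneg_right (hp t ht).le (norm_nonneg _)
  have h4 := (cfc f T - cfc p.eval T).le_of_opNorm_le h1 v
  rw [h2]
  have h5 : η * ‖v‖ + η * ‖v‖ ≤ ε := by
    rw [hη]
    have : 0 ≤ ‖v‖ := norm_nonneg v
    rw [← two_mul, div_mul_eq_mul_div, mul_div_assoc', div_le_iff₀ (by positivity)]
    nlinarith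
  linarith [norm_add_le ((cfc f T - cfc p.eval T) v) (((p.eval t - f t : ℝ) : ℂ) • v)]

/-- An eigenvalue of `A*A` for the eigenvector `v` is the Rayleigh quotient `‖A v‖² / ‖v‖²`. -/
lemma eigenvalue_opAA_mem (A : X →L[ℂ] Y) (hInj : Function.Injective A) {μ : ℂ} {v : X}
    (hv0 : v ≠ 0) (hv : opAA A v = μ • v) :
    ∃ t ∈ Ioc (0 : ℝ) (‖A‖ ^ 2), μ = (t : ℂ) := by
  have hn : 0 < ‖v‖ := norm_pos_iff.2 hv0
  have hA : 0 < ‖A v‖ := norm_pos_iff.2 fun h => hv0 (hInj (by simpa using h))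
  refine ⟨‖A v‖ ^ 2 / ‖v‖ ^ 2, ⟨by positivity, ?_⟩, ?_⟩
  · rw [div_le_iff₀ (by positivity), ← mul_pow]
    exact pow_le_pow_left₀ (norm_nonneg _) (A.le_opNorm v) 2
  · have h1 : inner ℂ v (opAA A v) = ((‖A v‖ : ℂ)) ^ 2 := by
      rw [opAA, ContinuousLinearMap.comp_apply, ContinuousLinearMap.adjoint_inner_right]
      exact inner_self_eq_norm_sq_to_K _
    have h2 : inner ℂ v (opAA A v) = μ * (‖v‖ : ℂ) ^ 2 := by
      rw [hv, inner_smul_right]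
      congr 1
      exact inner_self_eq_norm_sq_to_K _
    have hn' : (‖v‖ : ℂ) ≠ 0 := by exact_mod_cast hn.ne'
    push_cast
    rw [eq_div_iff (pow_ne_zero 2 hn'), ← h2, h1]

/-- A family of uniformly bounded operators that tends to zero on every eigenvector of `A*A` tends
to zero strongly, since these eigenvectors span a dense subspace. -/
lemma tendsto_of_tendsto_eigen (A : X →L[ℂ] Y) (hInj : Function.Injective A)
    (hCpt : IsCompactOperator A) {ι : Type*} {l : Filter ι} (F : ι → X →L[ℂ] X) (C : ℝ)
    (hC : ∀ᶠ i in l, ‖F i‖ ≤ C)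
    (hF : ∀ t ∈ Ioc (0 : ℝ) (‖A‖ ^ 2), ∀ v : X, opAA A v = (t : ℂ) • v →
      Tendsto (fun i => F i v) l (𝓝 0)) (x : X) :
    Tendsto (fun i => F i x) l (𝓝 0) := by
  let S : Submodule ℂ X :=
    { carrier := {x | Tendsto (fun i => F i x) l (𝓝 0)}
      zero_mem' := by simpa using (tendsto_const_nhds : Tendsto (fun _ : ι => (0 : X)) l (𝓝 0))
      add_mem' := fun {a b} ha hb => by
        simpa using Tendsto.add (show Tendsto (fun i => F i a) l (𝓝 0) from ha)
          (show Tendsto (fun i => F i b) l (𝓝 0) from hb)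
      smul_mem' := fun c a ha => by
        simpa using Tendsto.const_smul (show Tendsto (fun i => F i a) l (𝓝 0) from ha) c }
  have hcpt : IsCompactOperator (opAA A) :=
    hCpt.clm_comp (ContinuousLinearMap.adjoint A)
  have hsymm : (opAA A : X →ₗ[ℂ] X).IsSymmetric := (isSelfAdjoint_opAA A).isSymmetric
  have horth := ContinuousLinearMap.orthogonalComplement_iSup_eigenspaces_eq_bot hcpt hsymm
  have hle : (⨆ μ, Module.End.eigenspace (opAA A : X →ₗ[ℂ] X) μ) ≤ S := by
    refine iSup_le fun μ v hv => ?_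
    rw [Module.End.mem_eigenspace_iff] at hv
    by_cases hv0 : v = 0
    · rw [hv0]; exact S.zero_mem
    · obtain ⟨t, ht, rfl⟩ := eigenvalue_opAA_mem A hInj hv0 hv
      exact hF t ht v hv
  have hdense : S.topologicalClosure = ⊤ := by
    rw [Submodule.topologicalClosure_eq_top_iff, eq_bot_iff, ← horth]
    exact Submodule.orthogonal_le hle
  have hx : x ∈ closure (S : Set X) := by
    have : x ∈ S.topologicalClosure := hdense ▸ Submodule.mem_top
    exact this
  rw [Metric.tendsto_nhds]
  intro ε hε
  set η : ℝ := ε / (2 * (|C| + 1)) with hη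
  have hη0 : 0 < η := by positivity
  obtain ⟨s, hs, hxs⟩ := Metric.mem_closure_iff.1 hx η hη0
  have hs' : Tendsto (fun i => F i s) l (𝓝 0) := hs
  filter_upwards [hC, Metric.tendsto_nhds.1 hs' (ε / 2) (by positivity)] with i hi1 hi2
  rw [dist_zero_right] at hi2 ⊢
  have h1 : ‖F i (x - s)‖ ≤ C * ‖x - s‖ := (F i).le_of_opNorm_le hi1 _
  have h2 : C * ‖x - s‖ ≤ ε / 2 := by
    rw [dist_eq_norm] at hxs
    calc C * ‖x - s‖ ≤ (|C| + 1) * η := by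
          gcongr
          linarith [le_abs_self C]
      _ = ε / 2 := by rw [hη]; field_simp
  have h3 : F i x = F i (x - s) + F i s := by rw [← map_add, sub_add_cancel]
  rw [h3]
  linarith [norm_add_le (F i (x - s)) (F i s)]

lemma le_on_Icc_of_le_on_Ioc {b c : ℝ} (hb : 0 < b) {f : ℝ → ℝ}
    (hf : ContinuousOn f (Icc 0 b)) (h : ∀ t ∈ Ioc 0 b, f t ≤ c) :
    ∀ t ∈ Icc 0 b, f t ≤ c := by
  intro t ht
  rw [← closure_Ioc hb.ne] at hf ht
  exact ContinuousWithinAt.closure_le ht ((hf t ht).mono subset_closure)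
    continuousWithinAt_const h

/-- Strong convergence to zero of `f_i(A*A)` for uniformly bounded functions `f_i` that tend to
zero pointwise away from `0`; the value at `0` is irrelevant because `A*A` is injective. -/
lemma tendsto_cfc_opAA [Nontrivial X] (A : X →L[ℂ] Y) (hInj : Function.Injective A)
    (hCpt : IsCompactOperator A) (hA : 0 < ‖A‖ ^ 2) {ι : Type*} {l : Filter ι}
    (f : ι → ℝ → ℝ) {C : ℝ} (hC0 : 0 ≤ C)
    (hfc : ∀ᶠ i in l, ContinuousOn (f i) (Icc 0 (‖A‖ ^ 2)))
    (hfb : ∀ᶠ i in l, ∀ t ∈ Ioc (0 : ℝ) (‖A‖ ^ 2), |f i t| ≤ C)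
    (hf : ∀ t ∈ Ioc (0 : ℝ) (‖A‖ ^ 2), Tendsto (fun i => f i t) l (𝓝 0)) (x : X) :
    Tendsto (fun i => cfc (f i) (opAA A) x) l (𝓝 0) := by
  refine tendsto_of_tendsto_eigen A hInj hCpt (fun i => cfc (f i) (opAA A)) C ?_ ?_ x
  · filter_upwards [hfc, hfb] with i h1 h2
    exact norm_cfc_le hC0 fun t ht =>
      le_on_Icc_of_le_on_Ioc hA h1.abs h2 t (spectrum_opAA_subset A ht)
  · intro t ht v hv
    have h0 : Tendsto (fun i => ((f i t : ℝ) : ℂ) • v) l (𝓝 0) := by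
      have := (Complex.continuous_ofReal.tendsto 0).comp (hf t ht)
      simpa using this.smul_const v
    refine h0.congr' ?_
    filter_upwards [hfc] with i h1
    exact (cfc_apply_of_eigen _ (isSelfAdjoint_opAA A) (spectrum_opAA_subset A) h1
      ⟨ht.1.le, ht.2⟩ hv).symm

/-- The C*-identity turns a bound for `√t |g(t)|` into a bound for `g(A*A) A*`. -/
lemma norm_cfc_comp_adjoint_le [Nontrivial X] (A : X →L[ℂ] Y) (hA : 0 < ‖A‖ ^ 2) {g : ℝ → ℝ}
    (hg : ContinuousOn g (Icc 0 (‖A‖ ^ 2))) {c : ℝ} (hc : 0 ≤ c)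
    (h : ∀ t ∈ Ioc (0 : ℝ) (‖A‖ ^ 2), Real.sqrt t * |g t| ≤ c) :
    ‖(cfc g (opAA A)).comp (ContinuousLinearMap.adjoint A)‖ ≤ c := by
  set T := opAA A with hT
  have hTs : IsSelfAdjoint T := isSelfAdjoint_opAA A
  have hgs : ContinuousOn g (spectrum ℝ T) := hg.mono (spectrum_opAA_subset A)
  set B := A.comp (cfc g T) with hB
  have hBadj : (cfc g T).comp (ContinuousLinearMap.adjoint A) = ContinuousLinearMap.adjoint B := by
    rw [hB, ContinuousLinearMap.adjoint_comp]
    congr 1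
    exact (cfc_predicate g T : IsSelfAdjoint (cfc g T)).adjoint_eq.symm
  have hBB : (ContinuousLinearMap.adjoint B).comp B = cfc (fun t => g t * (t * g t)) T := by
    rw [cfc_mul g (fun t => t * g t) T hgs (continuousOn_id.mul hgs),
      cfc_mul (fun t => t) g T continuousOn_id hgs, cfc_id' ℝ T, ← hBadj]
    rfl
  rw [hBadj, LinearIsometryEquiv.norm_map]
  refine le_of_sq_le_sq ?_ hc
  rw [sq, ← ContinuousLinearMap.norm_adjoint_comp_self, hBB]
  refine norm_cfc_le (by positivity) fun t ht => ?_
  have ht' := spectrum_opAA_subset A ht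
  have h1 : Real.sqrt t * |g t| ≤ c :=
    le_on_Icc_of_le_on_Ioc hA (Real.continuous_sqrt.continuousOn.mul hg.abs) h t ht'
  have h2 : ‖g t * (t * g t)‖ = (Real.sqrt t * |g t|) ^ 2 := by
    rw [mul_pow, Real.sq_sqrt ht'.1, sq_abs, Real.norm_eq_abs, abs_of_nonneg]
    · ring
    · nlinarith [mul_nonneg ht'.1 (mul_self_nonneg (g t))]
  rw [h2]
  exact pow_le_pow_left₀ (by positivity) h1 2

lemma regSol_sub_eq [Nontrivial X] (A : X →L[ℂ] Y) {g : ℝ → ℝ} (φ : ℝ → ℝ)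
    (hg : ContinuousOn g (Icc 0 (‖A‖ ^ 2))) (x₀ v₀ xdag : X) (z : Y) :
    regSol A g φ x₀ v₀ z - xdag =
      cfc (fun t => 1 - t * g t) (opAA A) (x₀ - xdag) + cfc φ (opAA A) v₀ +
        (cfc g (opAA A)).comp (ContinuousLinearMap.adjoint A) (z - A xdag) := by
  have hTs : IsSelfAdjoint (opAA A) := isSelfAdjoint_opAA A
  have hgs : ContinuousOn g (spectrum ℝ (opAA A)) := hg.mono (spectrum_opAA_subset A)
  have hr : cfc (fun t => 1 - t * g t) (opAA A) = 1 - cfc g (opAA A) * opAA A := by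
    rw [cfc_sub (fun _ => (1 : ℝ)) (fun t => t * g t) (opAA A) continuousOn_const
      (continuousOn_id.mul hgs), cfc_const_one ℝ (opAA A)]
    have : (fun t => t * g t) = fun t => g t * t := by ext; ring
    rw [this, cfc_mul g (fun t => t) (opAA A) hgs continuousOn_id, cfc_id' ℝ (opAA A)]
  have hx : ContinuousLinearMap.adjoint A (A xdag) = opAA A xdag := rfl
  rw [hr, regSol]
  simp only [ContinuousLinearMap.comp_apply, sub_apply, map_sub, hx,
    one_apply_eq_self, mul_apply_eq_comp]
  abel

/-- any family `(g_α, φ_α)` satisfying conditions (i)–(iii) yields a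
regularization method: for every parameter choice `α(δ) → 0` with `δ²/α(δ) → 0` and every
data family `y^δ` with `‖y^δ − y‖ ≤ δ`, the regularized solutions converge to `x†`. -/
theorem general_affine_regularization_convergence
    (A : X →L[ℂ] Y) (hInj : Function.Injective A) (hCpt : IsCompactOperator A)
    (xdag : X) (ᾱ : ℝ) (hᾱ : 0 < ᾱ) (g φ : ℝ → ℝ → ℝ)
    (hgc : ∀ α ∈ Set.Ioc (0:ℝ) ᾱ, ContinuousOn (g α) (Set.Icc 0 (‖A‖ ^ 2)))
    (hφc : ∀ α ∈ Set.Ioc (0:ℝ) ᾱ, ContinuousOn (φ α) (Set.Icc 0 (‖A‖ ^ 2)))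
    (hi : ∀ lam ∈ Set.Ioc (0:ℝ) (‖A‖ ^ 2),
      Filter.Tendsto (fun α => 1 - lam * g α lam) (nhdsWithin 0 (Set.Ioi 0)) (nhds 0) ∧
      Filter.Tendsto (fun α => φ α lam) (nhdsWithin 0 (Set.Ioi 0)) (nhds 0))
    (γ₁ γ₂ γs : ℝ) (hγ₁ : 0 ≤ γ₁) (hγ₂ : 0 ≤ γ₂) (hγs : 0 ≤ γs)
    (hii : ∀ α ∈ Set.Ioc (0:ℝ) ᾱ, ∀ lam ∈ Set.Ioc (0:ℝ) (‖A‖ ^ 2),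
      |1 - lam * g α lam| ≤ γ₁ ∧ |φ α lam| ≤ γ₂)
    (hiii : ∀ α ∈ Set.Ioc (0:ℝ) ᾱ, ∀ lam ∈ Set.Ioc (0:ℝ) (‖A‖ ^ 2),
      Real.sqrt lam * |g α lam| ≤ γs / Real.sqrt α)
    (x₀ v₀ : X) (αsel : ℝ → ℝ) (hsel : ∀ δ : ℝ, 0 < δ → αsel δ ∈ Set.Ioc 0 ᾱ)
    (hsel0 : Filter.Tendsto αsel (nhdsWithin 0 (Set.Ioi 0)) (nhds 0))
    (hsel2 : Filter.Tendsto (fun δ => δ ^ 2 / αsel δ) (nhdsWithin 0 (Set.Ioi 0)) (nhds 0))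
    (yd : ℝ → Y) (hyd : ∀ δ : ℝ, 0 < δ → ‖yd δ - A xdag‖ ≤ δ) :
    Filter.Tendsto (fun δ => ‖regSol A (g (αsel δ)) (φ (αsel δ)) x₀ v₀ (yd δ) - xdag‖)
      (nhdsWithin 0 (Set.Ioi 0)) (nhds 0) := by
  rcases subsingleton_or_nontrivial X with hX | hX
  · have h0 : ∀ x : X, ‖x‖ = 0 := fun x => by rw [Subsingleton.elim x 0, norm_zero]
    simp only [h0]
    exact tendsto_const_nhds
  have hA : 0 < ‖A‖ ^ 2 := by
    obtain ⟨v, hv⟩ := exists_ne (0 : X)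
    have : A ≠ 0 := fun h => hv (hInj (by simp [h]))
    have := norm_pos_iff.2 this
    positivity
  have hpos : ∀ᶠ δ : ℝ in 𝓝[>] 0, 0 < δ := self_mem_nhdsWithin
  have hsel' : ∀ᶠ δ in 𝓝[>] 0, αsel δ ∈ Ioc 0 ᾱ := hpos.mono hsel
  have hselw : Tendsto αsel (𝓝[>] 0) (𝓝[>] 0) :=
    tendsto_nhdsWithin_iff.2 ⟨hsel0, hsel'.mono fun δ h => h.1⟩
  have hr : Tendsto (fun δ => cfc (fun t => 1 - t * g (αsel δ) t) (opAA A) (x₀ - xdag))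
      (𝓝[>] 0) (𝓝 0) :=
    tendsto_cfc_opAA A hInj hCpt hA (fun δ t => 1 - t * g (αsel δ) t) hγ₁
      (hsel'.mono fun δ h => continuousOn_const.sub (continuousOn_id.mul (hgc _ h)))
      (hsel'.mono fun δ h t ht => (hii _ h t ht).1)
      (fun t ht => (hi t ht).1.comp hselw) _
  have hφ : Tendsto (fun δ => cfc (φ (αsel δ)) (opAA A) v₀) (𝓝[>] 0) (𝓝 0) :=
    tendsto_cfc_opAA A hInj hCpt hA (fun δ => φ (αsel δ)) hγ₂
      (hsel'.mono fun δ h => hφc _ h)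
      (hsel'.mono fun δ h t ht => (hii _ h t ht).2)
      (fun t ht => (hi t ht).2.comp hselw) _
  have hnoise : Tendsto (fun δ => (cfc (g (αsel δ)) (opAA A)).comp
      (ContinuousLinearMap.adjoint A) (yd δ - A xdag)) (𝓝[>] 0) (𝓝 0) := by
    have hbd : Tendsto (fun δ => γs * Real.sqrt (δ ^ 2 / αsel δ)) (𝓝[>] 0) (𝓝 0) := by
      have := ((Real.continuous_sqrt.tendsto 0).comp hsel2).const_mul γs
      simpa using this
    refine squeeze_zero_norm' ?_ hbd
    filter_upwards [hpos] with δ hδ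
    have hα := hsel δ hδ
    have h1 := norm_cfc_comp_adjoint_le A hA (hgc _ hα)
      (div_nonneg hγs (Real.sqrt_nonneg (αsel δ))) (hiii _ hα)
    calc _ ≤ γs / Real.sqrt (αsel δ) * ‖yd δ - A xdag‖ :=
          ContinuousLinearMap.le_of_opNorm_le _ h1 _
      _ ≤ γs / Real.sqrt (αsel δ) * δ := by
          gcongr
          exact hyd δ hδ
      _ = γs * Real.sqrt (δ ^ 2 / αsel δ) := by
          rw [Real.sqrt_div (sq_nonneg δ), Real.sqrt_sq hδ.le]
          ring
  have hsum := ((hr.add hφ).add hnoise).norm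
  simp only [add_zero, norm_zero] at hsum
  refine hsum.congr' ?_
  filter_upwards [hsel'] with δ hα
  rw [regSol_sub_eq A (φ (αsel δ)) (hgc _ hα)]
end

section
/- Let x be a solution of the second-order flow with datum y^δ ∈ Y. Then the total energy function E(t) := ‖A x(t) − y^δ‖² + ‖ẋ(t)‖² is differentiable on [0,∞) with E'(t) = −2η‖ẋ(t)‖² for all t ≥ 0; in particular, E is non-increasing on [0,∞). -/
/-!
The chain rule gives `E' = 2⟪A x - yδ, A ẋ⟫ + 2⟪ẋ, ẍ⟫`. Substituting
`ẍ = A*(yδ - A x) - η ẋ` and moving `A*` across the inner product cancels the first term and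
leaves `-2η‖ẋ‖²`. This is nonpositive, so `E` is antitone on the convex set `[0, ∞)`.
-/

open Set Filter Topology

variable {X Y : Type*} [NormedAddCommGroup X] [InnerProductSpace ℝ X] [CompleteSpace X]
  [NormedAddCommGroup Y] [InnerProductSpace ℝ Y] [CompleteSpace Y]

/-- `x` (with first derivative `x'` and second derivative `x''`) is a twice continuously
differentiable solution on `[0,∞)` of the second-order flow `ẍ + η ẋ + A*A x = A* z`. -/
def IsSecondOrderFlow (A : X →L[ℝ] Y) (η : ℝ) (z : Y) (x x' x'' : ℝ → X) : Prop :=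
  (∀ t ∈ Set.Ici (0:ℝ), HasDerivWithinAt x (x' t) (Set.Ici 0) t) ∧
  (∀ t ∈ Set.Ici (0:ℝ), HasDerivWithinAt x' (x'' t) (Set.Ici 0) t) ∧
  ContinuousOn x'' (Set.Ici 0) ∧
  ∀ t ∈ Set.Ici (0:ℝ), x'' t + η • x' t + (ContinuousLinearMap.adjoint A) (A (x t)) =
    (ContinuousLinearMap.adjoint A) z

/-- the total energy `E(t) = ‖A x(t) − y^δ‖² + ‖ẋ(t)‖²` satisfies
`E'(t) = −2η‖ẋ(t)‖²` on `[0,∞)`; in particular `E` is non-increasing on `[0,∞)`. -/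
theorem total_energy_dissipation (A : X →L[ℝ] Y) (η : ℝ) (hη : 0 < η) (yδ : Y)
    (x x' x'' : ℝ → X) (hx : IsSecondOrderFlow A η yδ x x' x'') :
    (∀ t ∈ Set.Ici (0:ℝ),
      HasDerivWithinAt (fun s => ‖A (x s) - yδ‖ ^ 2 + ‖x' s‖ ^ 2)
        (-2 * η * ‖x' t‖ ^ 2) (Set.Ici 0) t) ∧
    AntitoneOn (fun s => ‖A (x s) - yδ‖ ^ 2 + ‖x' s‖ ^ 2) (Set.Ici 0) := by
  obtain ⟨h1, h2, -, hode⟩ := hx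
  have key : ∀ t ∈ Set.Ici (0:ℝ),
      HasDerivWithinAt (fun s => ‖A (x s) - yδ‖ ^ 2 + ‖x' s‖ ^ 2)
        (-2 * η * ‖x' t‖ ^ 2) (Set.Ici 0) t := by
    intro t ht
    have hA : HasDerivWithinAt (fun s => A (x s) - yδ) (A (x' t)) (Set.Ici 0) t :=
      (A.hasFDerivAt.comp_hasDerivWithinAt t (h1 t ht)).sub_const yδ
    refine (hA.norm_sq.add (h2 t ht).norm_sq).congr_deriv ?_
    have hx'' : x'' t = ContinuousLinearMap.adjoint A (yδ - A (x t)) - η • x' t := by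
      rw [map_sub, ← hode t ht]
      abel
    rw [hx'', inner_sub_right, ContinuousLinearMap.adjoint_inner_right, real_inner_smul_right,
      real_inner_self_eq_norm_sq, ← neg_sub (A (x t)) yδ, inner_neg_right,
      real_inner_comm (A (x' t))]
    ring
  refine ⟨key, antitoneOn_of_hasDerivWithinAt_nonpos (convex_Ici 0)
    (fun t ht => (key t ht).continuousWithinAt)
    (fun t ht => (key t (interior_subset ht)).mono interior_subset) fun t _ => ?_⟩
  have := mul_nonneg hη.le (sq_nonneg ‖x' t‖)
  linarith
end

section
/- Let x be a solution of the second-order flow with datum y^δ ∈ Y. Then ∫₀^∞ ‖ẋ(t)‖² dt ≤ (‖A x(0) − y^δ‖² + ‖ẋ(0)‖²)/(2η) < ∞ (so ẋ ∈ L²([0,∞), X)), and ẋ(t) → 0 in X as t → ∞. -/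
/-!
The energy `E t = ‖A x(t) - z‖ ^ 2 + ‖ẋ(t)‖ ^ 2` satisfies `E' = -2 η ‖ẋ‖ ^ 2`
(`IsSecondOrderFlow.hasDerivWithinAt_energy`). It is therefore nonincreasing and nonnegative, so it
converges to some `L ≥ 0`, and integrating its derivative gives `2 η ∫ ‖ẋ‖ ^ 2 = E 0 - L ≤ E 0`.

For the decay of the velocity, the bound `E ≤ E 0` makes `ẋ` bounded, hence also
`ẍ = -η ẋ - A* (A x - z)`. The function `‖ẋ‖ ^ 4` and its derivative `4 ‖ẋ‖ ^ 2 ⟪ẋ, ẍ⟫` are then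
both dominated by multiples of `‖ẋ‖ ^ 2`, so both are integrable, which forces `‖ẋ‖ ^ 4 → 0`.
-/

open Set Filter Topology MeasureTheory

variable {X Y : Type*} [NormedAddCommGroup X] [InnerProductSpace ℝ X] [CompleteSpace X]
  [NormedAddCommGroup Y] [InnerProductSpace ℝ Y] [CompleteSpace Y]

/-- The energy dissipation identity. -/
lemma IsSecondOrderFlow.hasDerivWithinAt_energy {A : X →L[ℝ] Y} {η : ℝ} {z : Y}
    {x x' x'' : ℝ → X} (hx : IsSecondOrderFlow A η z x x' x'') {t : ℝ} (ht : t ∈ Ici (0:ℝ)) :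
    HasDerivWithinAt (fun t => ‖A (x t) - z‖ ^ 2 + ‖x' t‖ ^ 2) (-(2 * η) * ‖x' t‖ ^ 2)
      (Ici 0) t := by
  obtain ⟨h1, h2, -, h4⟩ := hx
  have hA : HasDerivWithinAt (fun t => A (x t) - z) (A (x' t)) (Ici 0) t :=
    (A.hasFDerivAt.comp_hasDerivWithinAt t (h1 t ht)).sub_const z
  have h := hA.norm_sq.add (h2 t ht).norm_sq
  refine h.congr_deriv ?_
  have hode : x'' t = -(η • x' t) - ContinuousLinearMap.adjoint A (A (x t) - z) := by
    rw [map_sub, ← h4 t ht]; abel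
  rw [hode, inner_sub_right, inner_neg_right, inner_smul_right, real_inner_self_eq_norm_sq,
    ContinuousLinearMap.adjoint_inner_right, real_inner_comm]
  ring

lemma IsSecondOrderFlow.antitoneOn_energy {A : X →L[ℝ] Y} {η : ℝ} (hη : 0 < η) {z : Y}
    {x x' x'' : ℝ → X} (hx : IsSecondOrderFlow A η z x x' x'') :
    AntitoneOn (fun t => ‖A (x t) - z‖ ^ 2 + ‖x' t‖ ^ 2) (Ici 0) := by
  refine antitoneOn_of_hasDerivWithinAt_nonpos (f' := fun t => -(2 * η) * ‖x' t‖ ^ 2)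
    (convex_Ici 0) (fun t ht => (hx.hasDerivWithinAt_energy ht).continuousWithinAt)
    (fun t ht => (hx.hasDerivWithinAt_energy (interior_subset ht)).mono interior_subset) ?_
  intro t _
  have : 0 ≤ 2 * η * ‖x' t‖ ^ 2 := by positivity
  linarith

/-- `ẋ ∈ L²([0,∞), X)` with `∫₀^∞ ‖ẋ‖² ≤ E(0)/(2η)`, and `ẋ(t) → 0`. -/
theorem velocity_square_integrable_and_vanishing (A : X →L[ℝ] Y) (η : ℝ) (hη : 0 < η)
    (yδ : Y) (x x' x'' : ℝ → X) (hx : IsSecondOrderFlow A η yδ x x' x'') :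
    MeasureTheory.IntegrableOn (fun t => ‖x' t‖ ^ 2) (Set.Ici 0) ∧
    (∫ t in Set.Ici (0:ℝ), ‖x' t‖ ^ 2) ≤ (‖A (x 0) - yδ‖ ^ 2 + ‖x' 0‖ ^ 2) / (2 * η) ∧
    Filter.Tendsto x' Filter.atTop (nhds 0) := by
  have hE := fun t ht => hx.hasDerivWithinAt_energy (t := t) ht
  have hanti := hx.antitoneOn_energy hη
  obtain ⟨-, h2, h3, h4⟩ := hx
  set E : ℝ → ℝ := fun t => ‖A (x t) - yδ‖ ^ 2 + ‖x' t‖ ^ 2 with hEdef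
  have hE0 : ∀ t, 0 ≤ E t := fun t => by positivity
  have hEle : ∀ t ∈ Ici (0:ℝ), E t ≤ E 0 := fun t ht => hanti self_mem_Ici ht ht
  -- Freezing `E` at `E 0` for negative times makes it antitone on the whole line.
  obtain ⟨L, hL⟩ : ∃ L, Tendsto E atTop (𝓝 L) := by
    have hanti' : Antitone (fun t => E (max t 0)) := fun s t hst =>
      hanti (mem_Ici.2 (le_max_right _ _)) (mem_Ici.2 (le_max_right _ _)) (max_le_max_right 0 hst)
    refine ⟨_, (tendsto_atTop_ciInf hanti' ⟨0, ?_⟩).congr' ?_⟩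
    · rintro _ ⟨t, rfl⟩
      exact hE0 _
    · filter_upwards [eventually_ge_atTop 0] with t ht
      rw [max_eq_left ht]
  have hL0 : 0 ≤ L := ge_of_tendsto' hL hE0
  have hEcont : ContinuousWithinAt E (Ici 0) 0 := (hE 0 self_mem_Ici).continuousWithinAt
  have hEder : ∀ t ∈ Ioi (0:ℝ), HasDerivAt E (-(2 * η) * ‖x' t‖ ^ 2) t := fun t ht =>
    (hE t (Ioi_subset_Ici_self ht)).hasDerivAt (Ici_mem_nhds ht)
  have hEneg : ∀ t ∈ Ioi (0:ℝ), -(2 * η) * ‖x' t‖ ^ 2 ≤ 0 := fun t _ => by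
    have : 0 ≤ 2 * η * ‖x' t‖ ^ 2 := by positivity
    linarith
  have hint' := integrableOn_Ioi_deriv_of_nonpos hEcont hEder hEneg hL
  have hval := integral_Ioi_of_hasDerivAt_of_nonpos hEcont hEder hEneg hL
  have hint : IntegrableOn (fun t => ‖x' t‖ ^ 2) (Ioi 0) := by
    have h := hint'.const_mul (-(2 * η))⁻¹
    refine h.congr (Eventually.of_forall fun t => ?_)
    have : η ≠ 0 := hη.ne'
    field_simp
  refine ⟨(integrableOn_Ici_iff_integrableOn_Ioi (by finiteness)).2 hint, ?_, ?_⟩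
  · rw [integral_Ici_eq_integral_Ioi, le_div_iff₀ (by positivity)]
    rw [integral_const_mul] at hval
    change _ ≤ E 0
    linarith
  · have hv : ∀ t ∈ Ici (0:ℝ), ‖x' t‖ ≤ √(E 0) := fun t ht =>
      Real.le_sqrt_of_sq_le (le_trans (le_add_of_nonneg_left (by positivity)) (hEle t ht))
    have hr : ∀ t ∈ Ici (0:ℝ), ‖A (x t) - yδ‖ ≤ √(E 0) := fun t ht =>
      Real.le_sqrt_of_sq_le (le_trans (le_add_of_nonneg_right (by positivity)) (hEle t ht))
    set M : ℝ := η * √(E 0) + ‖ContinuousLinearMap.adjoint A‖ * √(E 0) with hM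
    have ha : ∀ t ∈ Ici (0:ℝ), ‖x'' t‖ ≤ M := fun t ht => by
      have hode : x'' t = -(η • x' t) - ContinuousLinearMap.adjoint A (A (x t) - yδ) := by
        rw [map_sub, ← h4 t ht]; abel
      rw [hode]
      refine (norm_sub_le _ _).trans (add_le_add ?_ ?_)
      · rw [norm_neg, norm_smul, Real.norm_of_nonneg hη.le]
        exact mul_le_mul_of_nonneg_left (hv t ht) hη.le
      · exact (ContinuousLinearMap.le_opNorm _ _).trans
          (mul_le_mul_of_nonneg_left (hr t ht) (norm_nonneg _))
    have hc1 : ContinuousOn x' (Ioi 0) := fun t ht =>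
      ((h2 t (Ioi_subset_Ici_self ht)).continuousWithinAt).mono Ioi_subset_Ici_self
    have hc2 : ContinuousOn x'' (Ioi 0) := h3.mono Ioi_subset_Ici_self
    have hder : ∀ t ∈ Ioi (0:ℝ), HasDerivAt (fun t => (‖x' t‖ ^ 2) ^ 2)
        (2 * ‖x' t‖ ^ 2 * (2 * inner ℝ (x' t) (x'' t))) t := fun t ht => by
      have h := (((h2 t (Ioi_subset_Ici_self ht)).hasDerivAt (Ici_mem_nhds ht)).norm_sq).pow 2
      exact h.congr_deriv (by simp)
    have hi4 : IntegrableOn (fun t => (‖x' t‖ ^ 2) ^ 2) (Ioi 0) := by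
      refine Integrable.mono' (hint.const_mul (E 0))
        (ContinuousOn.aestronglyMeasurable (by fun_prop) measurableSet_Ioi)
        (ae_restrict_of_forall_mem measurableSet_Ioi fun t ht => ?_)
      have hle : ‖x' t‖ ^ 2 ≤ E 0 :=
        le_trans (le_add_of_nonneg_left (by positivity)) (hEle t (Ioi_subset_Ici_self ht))
      rw [Real.norm_of_nonneg (by positivity), sq (‖x' t‖ ^ 2)]
      exact mul_le_mul_of_nonneg_right hle (by positivity)
    have hi4' : IntegrableOn (fun t => 2 * ‖x' t‖ ^ 2 * (2 * inner ℝ (x' t) (x'' t)))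
        (Ioi 0) := by
      refine Integrable.mono' (hint.const_mul (4 * (√(E 0) * M)))
        (ContinuousOn.aestronglyMeasurable (by fun_prop) measurableSet_Ioi)
        (ae_restrict_of_forall_mem measurableSet_Ioi fun t ht => ?_)
      have hin : |inner ℝ (x' t) (x'' t)| ≤ √(E 0) * M :=
        (abs_real_inner_le_norm _ _).trans
          (mul_le_mul (hv t (Ioi_subset_Ici_self ht)) (ha t (Ioi_subset_Ici_self ht)) (norm_nonneg _)
            (Real.sqrt_nonneg _))
      rw [Real.norm_eq_abs, abs_mul, abs_mul, abs_mul, abs_two, abs_of_nonneg (sq_nonneg ‖x' t‖)]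
      nlinarith [mul_le_mul_of_nonneg_left hin (sq_nonneg ‖x' t‖)]
    have hlim := tendsto_zero_of_hasDerivAt_of_integrableOn_Ioi hder hi4' hi4
    rw [tendsto_zero_iff_norm_tendsto_zero]
    have h := hlim.sqrt.sqrt
    simpa [Real.sqrt_sq, sq_nonneg] using h
end

section
/- Let x be a solution of the second-order flow with datum y^δ ∈ Y. Then lim_{t→∞} (‖A x(t) − y^δ‖² + ‖ẋ(t)‖²) = inf_{x* ∈ X} ‖A x* − y^δ‖². In particular, if there exist x† ∈ X and δ > 0 with ‖y^δ − A x†‖ ≤ δ, then lim_{t→∞} ‖A x(t) − y^δ‖ exists and is ≤ δ. -/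
/-!
The energy `E = ‖A x - y‖² + ‖ẋ‖²` satisfies `E' = -2η‖ẋ‖²`, hence is nonincreasing, and
`E ≥ m := inf ‖A x* - y‖²`. To see that `E` drops below every `m + ε`, pick `x*` with
`‖A x* - y‖² < m + ε` and consider the Lyapunov function
`G = ⟪ẋ, x - x*⟫ + (η/2)‖x - x*‖² + (3/(4η)) E`. Its derivative is
`-‖ẋ‖²/2 - ⟪A x - y, A x - A x*⟫`, which by polarization is at most `-(E - ‖A x* - y‖²)/2`.
If `E ≥ m + ε` held for all time, `G` would decrease at least linearly; but `G ≥ 0`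
by Young's inequality. Since `m ≤ ‖A x - y‖² ≤ E`, the residual itself also converges,
to `√m`, and `√m ≤ δ` as soon as some `x†` has residual at most `δ`.
-/

open Set Filter Topology

variable {X Y : Type*} [NormedAddCommGroup X] [InnerProductSpace ℝ X] [CompleteSpace X]
  [NormedAddCommGroup Y] [InnerProductSpace ℝ Y] [CompleteSpace Y]

open scoped InnerProductSpace

lemma antitoneOn_Ici_of_hasDerivWithinAt {f f' : ℝ → ℝ}
    (hf : ∀ t ∈ Ici (0:ℝ), HasDerivWithinAt f (f' t) (Ici 0) t)
    (hf' : ∀ t ∈ Ici (0:ℝ), f' t ≤ 0) : AntitoneOn f (Ici 0) :=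
  antitoneOn_of_hasDerivWithinAt_nonpos (convex_Ici 0)
    (fun t ht => (hf t ht).continuousWithinAt)
    (fun t ht => (hf t (interior_subset ht)).mono interior_subset)
    (fun t ht => hf' t (interior_subset ht))

/-- Energy dissipation: the conservative terms cancel by adjointness, leaving only the damping. -/
lemma IsSecondOrderFlow.energy_deriv {A : X →L[ℝ] Y} {η : ℝ} {z : Y} {x x' x'' : ℝ → X}
    (hx : IsSecondOrderFlow A η z x x' x'') {t : ℝ} (ht : t ∈ Ici (0:ℝ)) :
    HasDerivWithinAt (fun t => ‖A (x t) - z‖ ^ 2 + ‖x' t‖ ^ 2) (-2 * η * ‖x' t‖ ^ 2)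
      (Ici 0) t := by
  obtain ⟨h1, h2, -, h4⟩ := hx
  have hA : HasDerivWithinAt (fun t => A (x t) - z) (A (x' t)) (Ici 0) t :=
    (A.hasFDerivAt.comp_hasDerivWithinAt t (h1 t ht)).sub_const z
  refine (hA.norm_sq.add (h2 t ht).norm_sq).congr_deriv ?_
  have e := congrArg (fun v => ⟪x' t, v⟫_ℝ) (h4 t ht)
  simp only [inner_add_right, inner_smul_right, ContinuousLinearMap.adjoint_inner_right,
    real_inner_self_eq_norm_sq] at e
  rw [inner_sub_left, real_inner_comm, real_inner_comm (A (x' t)) z]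
  linarith

/-- The multiplier `x - x*` applied to the flow: the coefficient `η/2` makes the damping term
cancel. -/
lemma IsSecondOrderFlow.cross_deriv {A : X →L[ℝ] Y} {η : ℝ} {z : Y} {x x' x'' : ℝ → X}
    (hx : IsSecondOrderFlow A η z x x' x'') (xs : X) {t : ℝ} (ht : t ∈ Ici (0:ℝ)) :
    HasDerivWithinAt (fun t => ⟪x' t, x t - xs⟫_ℝ + η / 2 * ‖x t - xs‖ ^ 2)
      (‖x' t‖ ^ 2 - ⟪A (x t) - z, A (x t) - A xs⟫_ℝ) (Ici 0) t := by
  obtain ⟨h1, h2, -, h4⟩ := hx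
  have hs : HasDerivWithinAt (fun t => x t - xs) (x' t) (Ici 0) t := (h1 t ht).sub_const xs
  refine (((h2 t ht).inner ℝ hs).add (hs.norm_sq.const_mul (η / 2))).congr_deriv ?_
  have e := congrArg (fun v => ⟪v, x t - xs⟫_ℝ) (h4 t ht)
  simp only [inner_add_left, real_inner_smul_left, ContinuousLinearMap.adjoint_inner_left,
    map_sub] at e
  rw [inner_sub_left (A (x t)) z, real_inner_self_eq_norm_sq, real_inner_comm (x' t) (x t - xs)]
  linarith

/-- The Lyapunov argument: an energy staying at or above `c > ‖A x* - z‖²` would force the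
nonnegative function `G` to decrease at least linearly. -/
lemma IsSecondOrderFlow.exists_energy_lt {A : X →L[ℝ] Y} {η : ℝ} (hη : 0 < η) {z : Y}
    {x x' x'' : ℝ → X} (hx : IsSecondOrderFlow A η z x x' x'') (xs : X) {c : ℝ}
    (hc : ‖A xs - z‖ ^ 2 < c) :
    ∃ T ∈ Ici (0:ℝ), ‖A (x T) - z‖ ^ 2 + ‖x' T‖ ^ 2 < c := by
  by_contra! hE
  set d := (c - ‖A xs - z‖ ^ 2) / 2 with hd
  have hd0 : 0 < d := by rw [hd]; linarith
  -- `G(t) + d t` is nonincreasing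
  have anti := antitoneOn_Ici_of_hasDerivWithinAt
    (fun t ht => (((hx.cross_deriv xs ht).add
      ((hx.energy_deriv ht).const_mul (3 / (4 * η)))).add
      ((hasDerivWithinAt_id t (Ici 0)).const_mul d))) (fun t ht => by
    have e : 3 / (4 * η) * (-2 * η * ‖x' t‖ ^ 2) = -(3 / 2) * ‖x' t‖ ^ 2 := by
      field_simp; ring
    have p := norm_sub_sq_real (A (x t) - z) (A (x t) - A xs)
    rw [show A (x t) - z - (A (x t) - A xs) = A xs - z by abel] at p
    have q := hE t ht
    rw [e]
    nlinarith [sq_nonneg ‖A (x t) - A xs‖, sq_nonneg ‖x' t‖])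
  have lower : ∀ t ∈ Ici (0:ℝ), -(‖x' t‖ ^ 2) / (2 * η) ≤
      ⟪x' t, x t - xs⟫_ℝ + η / 2 * ‖x t - xs‖ ^ 2 := by
    intro t _
    have h := neg_le_of_abs_le (abs_real_inner_le_norm (x' t) (x t - xs))
    rw [div_le_iff₀ (by positivity)]
    nlinarith [sq_nonneg (‖x' t‖ - η * ‖x t - xs‖)]
  -- `G ≥ 0`, because `3/(4η) E` dominates the Young remainder `‖ẋ‖²/(2η)`
  have nonneg : ∀ t ∈ Ici (0:ℝ), 0 ≤ ⟪x' t, x t - xs⟫_ℝ + η / 2 * ‖x t - xs‖ ^ 2 +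
      3 / (4 * η) * (‖A (x t) - z‖ ^ 2 + ‖x' t‖ ^ 2) := by
    intro t ht
    have h := lower t ht
    have k : 0 ≤ -(‖x' t‖ ^ 2) / (2 * η) + 3 / (4 * η) * (‖A (x t) - z‖ ^ 2 + ‖x' t‖ ^ 2) := by
      have : -(‖x' t‖ ^ 2) / (2 * η) + 3 / (4 * η) * (‖A (x t) - z‖ ^ 2 + ‖x' t‖ ^ 2) =
          (3 * ‖A (x t) - z‖ ^ 2 + ‖x' t‖ ^ 2) / (4 * η) := by
        field_simp; ring
      rw [this]; positivity
    linarith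
  set G0 := ⟪x' 0, x 0 - xs⟫_ℝ + η / 2 * ‖x 0 - xs‖ ^ 2 +
      3 / (4 * η) * (‖A (x 0) - z‖ ^ 2 + ‖x' 0‖ ^ 2) with hG0
  have hG0n : 0 ≤ G0 := nonneg 0 self_mem_Ici
  have hT : (0:ℝ) ≤ (G0 + 1) / d := by positivity
  have h := anti self_mem_Ici hT hT
  have hn := nonneg _ hT
  simp only [Pi.add_apply, id, mul_zero, add_zero, mul_div_cancel₀ _ hd0.ne'] at h
  linarith

/-- `lim_{t→∞} (‖A x(t) − y^δ‖² + ‖ẋ(t)‖²) = inf_{x* ∈ X} ‖A x* − y^δ‖²`;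
in particular if `‖y^δ − A xdag‖ ≤ δ` for some `xdag` then `lim_{t→∞} ‖A x(t) − y^δ‖`
exists and is at most `δ`. -/
theorem total_energy_limit (A : X →L[ℝ] Y) (η : ℝ) (hη : 0 < η) (yδ : Y)
    (x x' x'' : ℝ → X) (hx : IsSecondOrderFlow A η yδ x x' x'') :
    Filter.Tendsto (fun t => ‖A (x t) - yδ‖ ^ 2 + ‖x' t‖ ^ 2) Filter.atTop
      (nhds (⨅ xs : X, ‖A xs - yδ‖ ^ 2)) ∧
    (∀ xdag : X, ∀ δ : ℝ, 0 < δ → ‖yδ - A xdag‖ ≤ δ →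
      ∃ L, L ≤ δ ∧ Filter.Tendsto (fun t => ‖A (x t) - yδ‖) Filter.atTop (nhds L)) := by
  have hbdd : BddBelow (range fun xs : X => ‖A xs - yδ‖ ^ 2) :=
    ⟨0, by rintro _ ⟨xs, rfl⟩; positivity⟩
  have hinf : ∀ xs : X, (⨅ xs : X, ‖A xs - yδ‖ ^ 2) ≤ ‖A xs - yδ‖ ^ 2 := ciInf_le hbdd
  have hanti := antitoneOn_Ici_of_hasDerivWithinAt (fun t ht => hx.energy_deriv ht)
    (fun t _ => by nlinarith [mul_nonneg hη.le (sq_nonneg ‖x' t‖)])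
  have hlim : Tendsto (fun t => ‖A (x t) - yδ‖ ^ 2 + ‖x' t‖ ^ 2) atTop
      (𝓝 (⨅ xs : X, ‖A xs - yδ‖ ^ 2)) := by
    refine tendsto_order.2 ⟨fun c hc => .of_forall fun t => ?_, fun c hc => ?_⟩
    · nlinarith [hinf (x t), sq_nonneg ‖x' t‖]
    · obtain ⟨xs, hxs⟩ := exists_lt_of_ciInf_lt hc
      obtain ⟨T, hT, hTc⟩ := hx.exists_energy_lt hη xs hxs
      filter_upwards [eventually_ge_atTop T] with t ht
      exact (hanti hT (le_trans hT ht) ht).trans_lt hTc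
  refine ⟨hlim, fun xdag δ hδ hdag => ⟨√(⨅ xs : X, ‖A xs - yδ‖ ^ 2), ?_, ?_⟩⟩
  · refine Real.sqrt_le_iff.2 ⟨hδ.le, (hinf xdag).trans ?_⟩
    rw [norm_sub_rev]
    gcongr
  · have hsq : Tendsto (fun t => ‖A (x t) - yδ‖ ^ 2) atTop
        (𝓝 (⨅ xs : X, ‖A xs - yδ‖ ^ 2)) :=
      tendsto_of_tendsto_of_tendsto_of_le_of_le tendsto_const_nhds hlim
        (fun t => hinf (x t)) (fun t => le_add_of_nonneg_right (sq_nonneg _))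
    simpa using hsq.sqrt
end

section
/- Let x† ∈ X, y = A x†, and let x be a solution of the second-order flow with exact datum y. If η ≥ ‖A‖, then t·‖A x(t) − y‖² → 0 as t → ∞; that is, ‖A x(t) − y‖ = o(t^{−1/2}) as t → ∞. -/
/-!
Put `u = x - x†`, so that `u'' + η u' + A*A u = 0`. The energy `e = ‖u'‖² + ‖A u‖²` satisfies
`e' = -2 η ‖u'‖² ≤ 0`, and the functional `V = ⟪u, u'⟫ + (η / 2) ‖u‖² + e / η`, which is
nonnegative by Young's inequality, satisfies `V' = -e`. Hence `e` is nonincreasing with finite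
integral over `[0, ∞)`, which forces `t e(t) → 0` (`tendsto_mul_of_antitone_of_lyapunov`), and
`‖A u‖² ≤ e`.
-/

open Set Filter Topology

variable {X Y : Type*} [NormedAddCommGroup X] [InnerProductSpace ℝ X] [CompleteSpace X]
  [NormedAddCommGroup Y] [InnerProductSpace ℝ Y] [CompleteSpace Y]

/-- A nonnegative nonincreasing function `e` on `[0, ∞)` whose negative has a nonnegative
antiderivative `V` is `o(1 / t)`: monotonicity gives `(t / 2) e(t) ≤ V(t / 2) - V(t)`, and `V` converges. -/
theorem tendsto_mul_of_antitone_of_lyapunov {e V : ℝ → ℝ}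
    (he : AntitoneOn e (Ici 0)) (he0 : ∀ t, 0 ≤ e t) (hV0 : ∀ t, 0 ≤ V t)
    (hV : ∀ t ∈ Ici (0:ℝ), HasDerivWithinAt V (-e t) (Ici 0) t) :
    Tendsto (fun t => t * e t) atTop (𝓝 0) := by
  have hVanti : AntitoneOn V (Ici 0) := by
    refine antitoneOn_of_hasDerivWithinAt_nonpos (f' := fun t => -e t) (convex_Ici 0)
      (fun t ht => (hV t ht).continuousWithinAt) (fun t ht => ?_) (fun t _ => ?_)
    · exact (hV t (interior_subset ht)).mono interior_subset
    · simpa using he0 t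
  -- Antitonicity is only known on `[0, ∞)`; precomposing with `max 0` makes it global.
  have hanti : Antitone (fun t => V (max 0 t)) := fun a b hab =>
    hVanti (mem_Ici.2 (le_max_left _ _)) (mem_Ici.2 (le_max_left _ _)) (max_le_max le_rfl hab)
  have hlim := tendsto_atTop_ciInf hanti ⟨0, by rintro _ ⟨t, rfl⟩; exact hV0 _⟩
  have hhalf : Tendsto (fun t : ℝ => t / 2) atTop atTop := tendsto_id.atTop_div_const two_pos
  have hdiff := ((hlim.comp hhalf).sub hlim).const_mul 2
  rw [sub_self, mul_zero] at hdiff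
  refine squeeze_zero' ?_ ?_ hdiff
  · filter_upwards [eventually_ge_atTop 0] with t ht using mul_nonneg ht (he0 t)
  · filter_upwards [eventually_ge_atTop 0] with t ht
    have hsub : Icc (t / 2) t ⊆ Ici 0 := fun s hs => le_trans (by positivity) hs.1
    have key : AntitoneOn (fun s => V s + s * e t) (Icc (t / 2) t) := by
      have hd : ∀ s ∈ Icc (t / 2) t, HasDerivWithinAt (fun s => V s + s * e t)
          (-e s + 1 * e t) (Icc (t / 2) t) s := fun s hs =>
        ((hV s (hsub hs)).mono hsub).add ((hasDerivWithinAt_id s _).mul_const (e t))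
      refine antitoneOn_of_hasDerivWithinAt_nonpos (convex_Icc _ _)
        (fun s hs => (hd s hs).continuousWithinAt)
        (fun s hs => (hd s (interior_subset hs)).mono interior_subset) (fun s hs => ?_)
      have hs' := interior_subset hs
      have := he (hsub hs') ht hs'.2
      linarith
    have hle : t / 2 ≤ t := by linarith
    have := key (left_mem_Icc.2 hle) (right_mem_Icc.2 hle) hle
    simp only [Function.comp, max_eq_right ht, max_eq_right (show 0 ≤ t / 2 by positivity)] at this ⊢
    linarith

/-- with exact data `y = A x†` and `η ≥ ‖A‖` one has
`t·‖A x(t) − y‖² → 0` as `t → ∞`, i.e. `‖A x(t) − y‖ = o(t^{−1/2})`. -/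
theorem residual_decay_rate_exact_data (A : X →L[ℝ] Y) (η : ℝ) (hη : 0 < η)
    (xdag : X) (x x' x'' : ℝ → X) (hx : IsSecondOrderFlow A η (A xdag) x x' x'')
    (hηA : ‖A‖ ≤ η) :
    Filter.Tendsto (fun t => t * ‖A (x t) - A xdag‖ ^ 2) Filter.atTop (nhds 0) := by
  obtain ⟨hx1, hx2, -, hode⟩ := hx
  set u : ℝ → X := fun t => x t - xdag with hu
  have hu1 : ∀ t ∈ Ici (0:ℝ), HasDerivWithinAt u (x' t) (Ici 0) t := fun t ht =>
    (hx1 t ht).sub_const xdag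
  have hAu1 : ∀ t ∈ Ici (0:ℝ), HasDerivWithinAt (fun t => A (u t)) (A (x' t)) (Ici 0) t :=
    fun t ht => A.hasFDerivAt.comp_hasDerivWithinAt t (hu1 t ht)
  -- The differential equation tested against an arbitrary vector.
  have hw : ∀ t ∈ Ici (0:ℝ), ∀ v : X,
      inner ℝ v (x'' t) = -η * inner ℝ v (x' t) - inner ℝ (A v) (A (u t)) := by
    intro t ht v
    have h := congrArg (fun w => inner ℝ v w) (hode t ht)
    simp only [inner_add_right, inner_smul_right, ContinuousLinearMap.adjoint_inner_right] at h
    simp only [hu, map_sub, inner_sub_right]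
    linarith
  set e : ℝ → ℝ := fun t => ‖x' t‖ ^ 2 + ‖A (u t)‖ ^ 2 with he
  have hed : ∀ t ∈ Ici (0:ℝ), HasDerivWithinAt e (-2 * η * ‖x' t‖ ^ 2) (Ici 0) t := by
    intro t ht
    refine ((hx2 t ht).norm_sq.add (hAu1 t ht).norm_sq).congr_deriv ?_
    rw [hw t ht, real_inner_self_eq_norm_sq, real_inner_comm (A (x' t)) (A (u t))]
    ring
  have hanti : AntitoneOn e (Ici 0) := by
    refine antitoneOn_of_hasDerivWithinAt_nonpos (convex_Ici 0)
      (fun t ht => (hed t ht).continuousWithinAt)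
      (fun t ht => (hed t (interior_subset ht)).mono interior_subset) (fun t _ => ?_)
    have : 0 ≤ η * ‖x' t‖ ^ 2 := by positivity
    linarith
  have he0 : ∀ t, 0 ≤ e t := fun t => by positivity
  have hmain : Tendsto (fun t => t * e t) atTop (𝓝 0) := by
    refine tendsto_mul_of_antitone_of_lyapunov
      (V := fun t => inner ℝ (u t) (x' t) + η / 2 * ‖u t‖ ^ 2 + η⁻¹ * e t) hanti he0 ?_ ?_
    · intro t
      -- Twice `η V` equals `‖η u + u'‖² + ‖u'‖² + 2 ‖A u‖²`.
      have hsq := norm_add_sq_real (η • u t) (x' t)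
      rw [inner_smul_left, norm_smul, Real.norm_of_nonneg hη.le] at hsq
      simp only [conj_trivial] at hsq
      have hpos : 0 ≤ η⁻¹ / 2 * (‖η • u t + x' t‖ ^ 2 + ‖x' t‖ ^ 2 + 2 * ‖A (u t)‖ ^ 2) := by
        positivity
      rw [hsq] at hpos
      refine hpos.trans_eq ?_
      simp only [he]
      field_simp
      ring
    · intro t ht
      refine ((((hu1 t ht).inner ℝ (hx2 t ht)).add ((hu1 t ht).norm_sq.const_mul (η / 2))).add
        ((hed t ht).const_mul η⁻¹)).congr_deriv ?_
      rw [hw t ht, real_inner_self_eq_norm_sq, real_inner_self_eq_norm_sq]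
      simp only [he]
      field_simp
      ring
  refine squeeze_zero' ?_ ?_ hmain
  · filter_upwards [eventually_ge_atTop 0] with t ht
    positivity
  · filter_upwards [eventually_ge_atTop 0] with t ht
    refine mul_le_mul_of_nonneg_left ?_ ht
    simp only [he, hu, map_sub]
    exact le_add_of_nonneg_left (by positivity)
end

section
/- Let x† ∈ X, y = A x†, δ > 0 and y^δ ∈ Y with ‖y^δ − y‖ ≤ δ. Let τ > 1 and let x be a solution of the second-order flow with datum y^δ and initial value x(0) = x₀. If ‖A x₀ − y^δ‖ > τδ, then the discrepancy function χ(T) := ‖A x(T) − y^δ‖ − τδ has at least one root, i.e. there exists T* > 0 with ‖A x(T*) − y^δ‖ = τδ. -/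
/-!
If the residual `‖A x(t) - yδ‖` never equals `τ δ` for `t > 0`, then by the intermediate value theorem
it stays above `τ δ` on `[0,∞)`. With `u = x - x†`, consider the Lyapunov function
`G = ⟪ẋ, u⟫ + (η/2) ‖u‖² + (1/(2η)) (‖ẋ‖² + ‖A x - yδ‖²)`.
The damping of the energy cancels the term `‖ẋ‖²` in the derivative of `⟪ẋ, u⟫`, so that
`G' = -⟪A x - yδ, A u⟫ ≤ -r (r - δ) ≤ -τ (τ - 1) δ²`, where `r = ‖A x - yδ‖`
(`flow_hasDerivWithinAt_lyapunov`, `tau_mul_le_inner`).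
Hence `G` decreases at least linearly, although
`G ≥ (1/(2η)) ‖ẋ + η u‖² ≥ 0` (`flowLyapunov_nonneg`): a contradiction.
-/

open Set Filter Topology

variable {X Y : Type*} [NormedAddCommGroup X] [InnerProductSpace ℝ X] [CompleteSpace X]
  [NormedAddCommGroup Y] [InnerProductSpace ℝ Y] [CompleteSpace Y]

/-- The Lyapunov function `⟪v, x - x†⟫ + (η/2) ‖x - x†‖² + (1/(2η)) (‖v‖² + ‖A x - z‖²)` at
position `x = p` and velocity `v`. The last summand is the mechanical energy divided by `η`. -/
noncomputable def flowLyapunov (A : X →L[ℝ] Y) (η : ℝ) (z : Y) (xdag p v : X) : ℝ :=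
  inner ℝ v (p - xdag) + η / 2 * ‖p - xdag‖ ^ 2
    + 1 / (2 * η) * (‖v‖ ^ 2 + ‖A p - z‖ ^ 2)

lemma flowLyapunov_nonneg (A : X →L[ℝ] Y) {η : ℝ} (hη : 0 < η) (z : Y) (xdag p v : X) :
    0 ≤ flowLyapunov A η z xdag p v := by
  have hsq : ‖v + η • (p - xdag)‖ ^ 2
      = ‖v‖ ^ 2 + 2 * (η * inner ℝ v (p - xdag)) + η ^ 2 * ‖p - xdag‖ ^ 2 := by
    rw [norm_add_sq_real, inner_smul_right, norm_smul, mul_pow, Real.norm_eq_abs, sq_abs]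
  have hG : flowLyapunov A η z xdag p v
      = 1 / (2 * η) * (‖v + η • (p - xdag)‖ ^ 2 + ‖A p - z‖ ^ 2) := by
    rw [hsq, flowLyapunov]
    field_simp
    ring
  rw [hG]
  positivity

/-- Along the flow, the derivative of the Lyapunov function is `-⟪A x - z, A (x - x†)⟫`. -/
lemma flow_hasDerivWithinAt_lyapunov {A : X →L[ℝ] Y} {η : ℝ} (hη : 0 < η) {z : Y}
    (xdag : X) {x x' x'' : ℝ → X} (hx : IsSecondOrderFlow A η z x x' x'') {t : ℝ} (ht : 0 ≤ t) :
    HasDerivWithinAt (fun s => flowLyapunov A η z xdag (x s) (x' s))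
      (-inner ℝ (A (x t) - z) (A (x t - xdag))) (Ici 0) t := by
  obtain ⟨h1, h2, -, h4⟩ := hx
  have hd1 := h1 t ht
  have hd2 := h2 t ht
  have hu := hd1.sub_const xdag
  have hr := (A.hasFDerivAt.comp_hasDerivWithinAt t hd1).sub_const z
  have hode : x'' t = -(η • x' t) - ContinuousLinearMap.adjoint A (A (x t) - z) := by
    rw [map_sub, ← h4 t ht]
    abel
  have hmain := ((hd2.inner ℝ hu).add (hu.norm_sq.const_mul (η / 2))).add
    ((hd2.norm_sq.add hr.norm_sq).const_mul (1 / (2 * η)))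
  refine hmain.congr_deriv ?_
  rw [hode]
  simp only [inner_sub_left, inner_sub_right, inner_neg_left, inner_neg_right, inner_smul_left,
    inner_smul_right, ContinuousLinearMap.adjoint_inner_left,
    ContinuousLinearMap.adjoint_inner_right, map_sub, Function.comp, RCLike.conj_to_real,
    real_inner_comm (x' t), real_inner_comm (A (x' t))]
  field_simp
  ring

/-- With `r = ‖q - z‖ ≥ τ δ` and noise level `δ`, Cauchy-Schwarz gives
`⟪q - z, q - y⟫ ≥ r (r - δ) ≥ τ (τ - 1) δ²`. -/
lemma tau_mul_le_inner {q z y : Y} {δ τ : ℝ} (hδ : 0 < δ) (hτ : 1 < τ)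
    (hnoise : ‖z - y‖ ≤ δ) (hq : τ * δ ≤ ‖q - z‖) :
    τ * (τ - 1) * δ ^ 2 ≤ inner ℝ (q - z) (q - y) := by
  have hsplit : inner ℝ (q - z) (q - y) = ‖q - z‖ ^ 2 + inner ℝ (q - z) (z - y) := by
    rw [← real_inner_self_eq_norm_sq, ← inner_add_right, sub_add_sub_cancel]
  have hcs : -(‖q - z‖ * ‖z - y‖) ≤ inner ℝ (q - z) (z - y) :=
    neg_le_of_abs_le (abs_real_inner_le_norm _ _)
  have hr : ‖q - z‖ * ‖z - y‖ ≤ ‖q - z‖ * δ := by gcongr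
  have hmul : (τ * δ) * ((τ - 1) * δ) ≤ ‖q - z‖ * (‖q - z‖ - δ) := by
    have : 0 ≤ (τ - 1) * δ := mul_nonneg (by linarith) hδ.le
    exact mul_le_mul hq (by linarith) this (norm_nonneg _)
  nlinarith

/-- if `‖A x₀ − y^δ‖ > τδ` with `τ > 1` and `‖y^δ − A x†‖ ≤ δ`, then the
discrepancy function `χ(T) = ‖A x(T) − y^δ‖ − τδ` has at least one root `T* > 0`. -/
theorem discrepancy_principle_has_root (A : X →L[ℝ] Y) (η : ℝ) (hη : 0 < η)
    (xdag : X) (δ : ℝ) (hδ : 0 < δ) (yδ : Y) (hnoise : ‖yδ - A xdag‖ ≤ δ)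
    (τ : ℝ) (hτ : 1 < τ) (x₀ v₀ : X) (x x' x'' : ℝ → X)
    (hx : IsSecondOrderFlow A η yδ x x' x'') (hx0 : x 0 = x₀) (hv0 : x' 0 = v₀)
    (hstart : τ * δ < ‖A x₀ - yδ‖) :
    ∃ Tstar : ℝ, 0 < Tstar ∧ ‖A (x Tstar) - yδ‖ = τ * δ := by
  have hcont : ContinuousOn (fun t => ‖A (x t) - yδ‖) (Ici 0) := by
    have hxc : ContinuousOn x (Ici 0) := fun t ht => (hx.1 t ht).continuousWithinAt
    exact ((A.continuous.comp_continuousOn hxc).sub continuousOn_const).norm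
  subst hx0
  by_contra! hno
  have habove : ∀ t, 0 ≤ t → τ * δ ≤ ‖A (x t) - yδ‖ := by
    intro t ht
    by_contra! hlt
    obtain ⟨s, hs, hsr⟩ := intermediate_value_Icc' ht (hcont.mono Icc_subset_Ici_self)
      ⟨hlt.le, hstart.le⟩
    rcases hs.1.eq_or_lt with rfl | hpos
    · exact hstart.ne' hsr
    · exact hno s hpos hsr
  set c : ℝ := τ * (τ - 1) * δ ^ 2 with hc
  have hcpos : 0 < c := by
    have : 0 < τ - 1 := by linarith
    positivity
  have hderiv : ∀ t, 0 ≤ t → HasDerivWithinAt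
      (fun s => flowLyapunov A η yδ xdag (x s) (x' s) + c * s)
      (-inner ℝ (A (x t) - yδ) (A (x t - xdag)) + c * 1) (Ici 0) t := fun t ht =>
    (flow_hasDerivWithinAt_lyapunov hη xdag hx ht).add
      ((hasDerivWithinAt_id t _).const_mul c)
  have hanti : AntitoneOn (fun s => flowLyapunov A η yδ xdag (x s) (x' s) + c * s) (Ici 0) := by
    refine antitoneOn_of_hasDerivWithinAt_nonpos (convex_Ici 0)
      (fun t ht => (hderiv t ht).continuousWithinAt)
      (fun t ht => (hderiv t (interior_subset ht)).mono interior_subset) fun t ht => ?_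
    have := tau_mul_le_inner hδ hτ hnoise (habove t (interior_subset ht))
    rw [map_sub]
    linarith
  -- At time `G(0) / c + 1` the linear bound forces `G ≤ -c`.
  set g₀ := flowLyapunov A η yδ xdag (x 0) (x' 0) with hg₀
  have hg₀nn : 0 ≤ g₀ := flowLyapunov_nonneg A hη yδ xdag _ _
  have hT : 0 ≤ g₀ / c + 1 := by positivity
  have hle := hanti (mem_Ici.2 le_rfl) (mem_Ici.2 hT) hT
  have hnn := flowLyapunov_nonneg A hη yδ xdag (x (g₀ / c + 1)) (x' (g₀ / c + 1))
  have hcT : c * (g₀ / c + 1) = g₀ + c := by field_simp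
  simp only [hcT, mul_zero] at hle
  linarith
end

section
/- Let x† ∈ X, y = A x†, δ > 0, y^δ ∈ Y with ‖y^δ − y‖ ≤ δ, τ > 1, and let x be a solution of the second-order flow with datum y^δ and initial values (x₀, ẋ₀). Define the total energy discrepancy function χ_te(T) := ‖A x(T) − y^δ‖² + ‖ẋ(T)‖² − τ²δ². Then χ_te is continuous and monotonically non-increasing on [0,∞), and if ‖A x₀ − y^δ‖² + ‖ẋ₀‖² > τ²δ², then the equation χ_te(T) = 0 has a unique solution T* ∈ (0, ∞). -/
/-!
Write `E = ‖A x - yδ‖² + ‖ẋ‖²` for the total energy and `c = τ²δ² > δ²` for the threshold. The flow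
equation gives `E' = -2η‖ẋ‖² ≤ 0`, hence continuity and monotonicity.

The rest uses the inequality `⟪x - x†, A*(A x - yδ)⟫ ≥ (‖A x - yδ‖² - δ²)/2`
(`IsSecondOrderFlow.residual_bound`), a consequence of the noise bound.

*Existence of a zero.* With `u = x - x†`, the functional
`W = ⟪u, ẋ⟫ + (η/2)‖u‖² + (3/(4η)) E` is nonnegative and satisfies `W' ≤ -(E - δ²)/2`. If `E`
stayed above `c` forever, `W` would decrease at least linearly and become negative. So `E` drops to
`c` or below, and the intermediate value theorem applies.

*Uniqueness.* If `E = c` at two times, `E` is constant between them, so `ẋ = 0` and then `ẍ = 0`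
there; the flow equation yields `A*(A x - yδ) = 0`, and the inequality above gives
`c = E = ‖A x - yδ‖² ≤ δ² < c`.
-/

open Set Filter Topology

variable {X Y : Type*} [NormedAddCommGroup X] [InnerProductSpace ℝ X] [CompleteSpace X]
  [NormedAddCommGroup Y] [InnerProductSpace ℝ Y] [CompleteSpace Y]

namespace IsSecondOrderFlow

variable {A : X →L[ℝ] Y} {η : ℝ} {z : Y} {x x' x'' : ℝ → X}

theorem hasDerivWithinAt_energy_s14 (hx : IsSecondOrderFlow A η z x x' x'') {t : ℝ} (ht : 0 ≤ t) :
    HasDerivWithinAt (fun T => ‖A (x T) - z‖ ^ 2 + ‖x' T‖ ^ 2) (-2 * η * ‖x' t‖ ^ 2)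
      (Set.Ici 0) t := by
  obtain ⟨h1, h2, -, h4⟩ := hx
  have hA : HasDerivWithinAt (fun T => A (x T) - z) (A (x' t)) (Set.Ici 0) t :=
    (A.hasFDerivAt.comp_hasDerivWithinAt t (h1 t ht)).sub_const z
  refine (hA.norm_sq.add (h2 t ht).norm_sq).congr_deriv ?_
  have e := congrArg (fun w => inner ℝ (x' t) w) (h4 t ht)
  simp only [inner_add_right, inner_smul_right, ContinuousLinearMap.adjoint_inner_right,
    real_inner_self_eq_norm_sq] at e
  rw [inner_sub_left, real_inner_comm (A (x' t)) (A (x t)), real_inner_comm (A (x' t)) z]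
  linarith

/-- Coercivity of the residual up to noise: tested against `x - x†`, the gradient `A*(A x - z)`
controls the squared residual. -/
theorem residual_bound (A : X →L[ℝ] Y) {z : Y} {xdag : X} {δ : ℝ} (hnoise : ‖z - A xdag‖ ≤ δ)
    (w : X) :
    (‖A w - z‖ ^ 2 - δ ^ 2) / 2 ≤
      inner ℝ (w - xdag) ((ContinuousLinearMap.adjoint A) (A w - z)) := by
  have e : A (w - xdag) = (A w - z) + (z - A xdag) := by rw [map_sub]; abel
  rw [ContinuousLinearMap.adjoint_inner_right, e, inner_add_left, real_inner_self_eq_norm_sq]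
  have h := neg_le_of_abs_le (abs_real_inner_le_norm (z - A xdag) (A w - z))
  have h' := mul_le_mul_of_nonneg_right hnoise (norm_nonneg (A w - z))
  nlinarith [sq_nonneg (‖A w - z‖ - δ)]

theorem antitoneOn_energy_s14 (hx : IsSecondOrderFlow A η z x x' x'') (hη : 0 < η) :
    AntitoneOn (fun T => ‖A (x T) - z‖ ^ 2 + ‖x' T‖ ^ 2) (Set.Ici 0) := by
  refine antitoneOn_of_hasDerivWithinAt_nonpos (convex_Ici 0)
    (fun t ht => (hx.hasDerivWithinAt_energy_s14 ht).continuousWithinAt)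
    (fun t ht => (hx.hasDerivWithinAt_energy_s14 (interior_subset ht)).mono interior_subset)
    (fun t _ => ?_)
  have := mul_nonneg hη.le (sq_nonneg ‖x' t‖)
  linarith

/-- The energy cannot stay strictly above a level `c > δ²`: otherwise the Lyapunov functional `W`
would decrease at rate at least `(c - δ²)/2` while remaining nonnegative. -/
theorem exists_energy_le (hx : IsSecondOrderFlow A η z x x' x'') (hη : 0 < η) {xdag : X}
    {δ c : ℝ} (hnoise : ‖z - A xdag‖ ≤ δ) (hc : δ ^ 2 < c) :
    ∃ t, 0 ≤ t ∧ ‖A (x t) - z‖ ^ 2 + ‖x' t‖ ^ 2 ≤ c := by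
  by_contra! hcon
  set W : ℝ → ℝ := fun T => inner ℝ (x T - xdag) (x' T) + η / 2 * ‖x T - xdag‖ ^ 2 +
    3 / (4 * η) * (‖A (x T) - z‖ ^ 2 + ‖x' T‖ ^ 2) with hW
  have hWnonneg : ∀ t, 0 ≤ W t := by
    intro t
    have h := neg_le_of_abs_le (abs_real_inner_le_norm (x t - xdag) (x' t))
    have h1 : 0 ≤ (η * ‖x t - xdag‖ - ‖x' t‖) ^ 2 / (2 * η) := by positivity
    have h2 : (η * ‖x t - xdag‖ - ‖x' t‖) ^ 2 / (2 * η) =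
        η / 2 * ‖x t - xdag‖ ^ 2 - ‖x t - xdag‖ * ‖x' t‖ +
          2 / (4 * η) * ‖x' t‖ ^ 2 := by
      field_simp; ring
    have h3 : 0 ≤ 1 / (4 * η) * ‖x' t‖ ^ 2 := by positivity
    have h4 : 0 ≤ 3 / (4 * η) * ‖A (x t) - z‖ ^ 2 := by positivity
    have h5 : 3 / (4 * η) * (‖A (x t) - z‖ ^ 2 + ‖x' t‖ ^ 2) =
        3 / (4 * η) * ‖A (x t) - z‖ ^ 2 + 2 / (4 * η) * ‖x' t‖ ^ 2
          + 1 / (4 * η) * ‖x' t‖ ^ 2 := by ring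
    simp only [hW]
    linarith
  have hderiv : ∀ t, 0 ≤ t → HasDerivWithinAt (fun T => W T + (c - δ ^ 2) / 2 * T)
      ((inner ℝ (x t - xdag) (x'' t) + inner ℝ (x' t) (x' t)
        + η / 2 * (2 * inner ℝ (x t - xdag) (x' t))
        + 3 / (4 * η) * (-2 * η * ‖x' t‖ ^ 2)) + (c - δ ^ 2) / 2 * 1) (Set.Ici 0) t := by
    intro t ht
    have hu : HasDerivWithinAt (fun T => x T - xdag) (x' t) (Set.Ici 0) t :=
      (hx.1 t ht).sub_const xdag
    exact (((hu.inner ℝ (hx.2.1 t ht)).add (hu.norm_sq.const_mul _)).add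
      ((hx.hasDerivWithinAt_energy_s14 ht).const_mul _)).add ((hasDerivWithinAt_id t _).const_mul _)
  have hanti : AntitoneOn (fun T => W T + (c - δ ^ 2) / 2 * T) (Set.Ici 0) := by
    refine antitoneOn_of_hasDerivWithinAt_nonpos (convex_Ici 0)
      (fun t ht => (hderiv t ht).continuousWithinAt)
      (fun t ht => (hderiv t (interior_subset ht)).mono interior_subset) (fun t ht => ?_)
    have ht0 : 0 ≤ t := interior_subset ht
    have hb := residual_bound A hnoise (x t)
    have e := congrArg (fun w => inner ℝ (x t - xdag) w) (hx.2.2.2 t ht0)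
    simp only [inner_add_right, inner_smul_right] at e
    rw [map_sub, inner_sub_right] at hb
    have h3 : 3 / (4 * η) * (-2 * η * ‖x' t‖ ^ 2) = -(3 / 2) * ‖x' t‖ ^ 2 := by
      field_simp; ring
    rw [h3, real_inner_self_eq_norm_sq]
    linarith [hcon t ht0]
  have hk : 0 < (c - δ ^ 2) / 2 := by linarith
  have hT : 0 ≤ (W 0 + 1) / ((c - δ ^ 2) / 2) :=
    div_nonneg (by linarith [hWnonneg 0]) hk.le
  have h := hanti (Set.self_mem_Ici) hT hT
  simp only [mul_zero, add_zero] at h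
  rw [mul_div_cancel₀ _ hk.ne'] at h
  linarith [hWnonneg ((W 0 + 1) / ((c - δ ^ 2) / 2))]

/-- Above the level `δ²` the energy takes each value at most once. -/
theorem energy_ne_of_lt (hx : IsSecondOrderFlow A η z x x' x'') (hη : 0 < η) {xdag : X}
    {δ c : ℝ} (hnoise : ‖z - A xdag‖ ≤ δ) (hc : δ ^ 2 < c) {a b : ℝ} (ha : 0 ≤ a) (hab : a < b)
    (hEa : ‖A (x a) - z‖ ^ 2 + ‖x' a‖ ^ 2 = c) :
    ‖A (x b) - z‖ ^ 2 + ‖x' b‖ ^ 2 ≠ c := by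
  intro hEb
  have hE : ∀ t ∈ Set.Ioo a b, ‖A (x t) - z‖ ^ 2 + ‖x' t‖ ^ 2 = c := by
    intro t ht
    have ht0 : 0 ≤ t := ha.trans ht.1.le
    have h1 := hx.antitoneOn_energy_s14 hη ha ht0 ht.1.le
    have h2 := hx.antitoneOn_energy_s14 hη ht0 (ht0.trans ht.2.le) ht.2.le
    simp only at h1 h2
    linarith
  have hv : ∀ t ∈ Set.Ioo a b, x' t = 0 := by
    intro t ht
    have ht0 : 0 < t := ha.trans_lt ht.1
    have hd := (hx.hasDerivWithinAt_energy_s14 ht0.le).hasDerivAt (Ici_mem_nhds ht0)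
    have hconst : (fun T => ‖A (x T) - z‖ ^ 2 + ‖x' T‖ ^ 2) =ᶠ[𝓝 t] fun _ => c :=
      Filter.eventuallyEq_of_mem (Ioo_mem_nhds ht.1 ht.2) hE
    have h0 := hd.unique ((hasDerivAt_const t c).congr_of_eventuallyEq hconst)
    simpa [hη.ne'] using h0
  obtain ⟨t, ht⟩ := Set.nonempty_Ioo.2 hab
  have ht0 : 0 < t := ha.trans_lt ht.1
  have hacc : x'' t = 0 :=
    ((hx.2.1 t ht0.le).hasDerivAt (Ici_mem_nhds ht0)).unique
      ((hasDerivAt_const t (0 : X)).congr_of_eventuallyEq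
        (Filter.eventuallyEq_of_mem (Ioo_mem_nhds ht.1 ht.2) hv))
  have h4 := hx.2.2.2 t ht0.le
  rw [hacc, hv t ht, smul_zero, zero_add, zero_add] at h4
  have hb := residual_bound A hnoise (x t)
  rw [map_sub, h4, sub_self, inner_zero_right] at hb
  have h5 := hE t ht
  rw [hv t ht, norm_zero] at h5
  linarith

end IsSecondOrderFlow

/-- the total energy discrepancy function
`χ_te(T) = ‖A x(T) − y^δ‖² + ‖ẋ(T)‖² − τ²δ²` is continuous and non-increasing on `[0,∞)`,
and if `‖A x₀ − y^δ‖² + ‖ẋ₀‖² > τ²δ²` then `χ_te(T) = 0` has a unique solution `T* > 0`. -/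
theorem total_energy_discrepancy_function (A : X →L[ℝ] Y) (η : ℝ) (hη : 0 < η)
    (xdag : X) (δ : ℝ) (hδ : 0 < δ) (yδ : Y) (hnoise : ‖yδ - A xdag‖ ≤ δ)
    (τ : ℝ) (hτ : 1 < τ) (x₀ v₀ : X) (x x' x'' : ℝ → X)
    (hx : IsSecondOrderFlow A η yδ x x' x'') (hx0 : x 0 = x₀) (hv0 : x' 0 = v₀) :
    ContinuousOn (fun T => ‖A (x T) - yδ‖ ^ 2 + ‖x' T‖ ^ 2 - τ ^ 2 * δ ^ 2) (Set.Ici 0) ∧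
    AntitoneOn (fun T => ‖A (x T) - yδ‖ ^ 2 + ‖x' T‖ ^ 2 - τ ^ 2 * δ ^ 2) (Set.Ici 0) ∧
    (τ ^ 2 * δ ^ 2 < ‖A x₀ - yδ‖ ^ 2 + ‖v₀‖ ^ 2 →
      ∃! Tstar : ℝ, 0 < Tstar ∧ ‖A (x Tstar) - yδ‖ ^ 2 + ‖x' Tstar‖ ^ 2 - τ ^ 2 * δ ^ 2 = 0) := by
  have hcont : ContinuousOn (fun T => ‖A (x T) - yδ‖ ^ 2 + ‖x' T‖ ^ 2) (Set.Ici 0) :=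
    fun t ht => (hx.hasDerivWithinAt_energy_s14 ht).continuousWithinAt
  refine ⟨hcont.sub continuousOn_const,
    fun a ha b hb hab => sub_le_sub_right (hx.antitoneOn_energy_s14 hη ha hb hab) _, fun h0 => ?_⟩
  subst hx0 hv0
  have hc : δ ^ 2 < τ ^ 2 * δ ^ 2 := by
    have h1 : 0 < δ ^ 2 := by positivity
    exact lt_mul_of_one_lt_left h1 (one_lt_pow₀ hτ two_ne_zero)
  obtain ⟨t, ht0, ht⟩ := hx.exists_energy_le hη hnoise hc
  obtain ⟨s, hs, hEs⟩ := intermediate_value_Icc' ht0 (hcont.mono Set.Icc_subset_Ici_self)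
    ⟨ht, h0.le⟩
  simp only at hEs
  have hs0 : 0 < s := by
    refine lt_of_le_of_ne hs.1 ?_
    rintro rfl
    exact h0.ne' hEs
  refine ⟨s, ⟨hs0, sub_eq_zero.2 hEs⟩, ?_⟩
  rintro r ⟨hr0, hr⟩
  have hEr := sub_eq_zero.1 hr
  rcases lt_trichotomy r s with h | h | h
  · exact absurd hEs (hx.energy_ne_of_lt hη hnoise hc hr0.le h hEr)
  · exact h
  · exact absurd hEr (hx.energy_ne_of_lt hη hnoise hc hs0.le h hEs)
end

section
/- Let η > 0 and λ > η²/4, and set β = √(4λ − η²). Then for all t ≥ 0: (i) |e^{−ηt/2} ((η/β) sin(βt/2) + cos(βt/2))| ≤ 1, and (ii) (2/β) e^{−ηt/2} |sin(βt/2)| ≤ 2/(eη). In particular, the bias function r^b and velocity function φ^b of the second-order asymptotical regularization in the underdamped spectral regime satisfy the uniform bounds |r^b| ≤ 1 and |φ^b| ≤ 2/(eη). -/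
/-!
With `β = √(4λ − η²)` and `x = ηt/2 ≥ 0`, both bounds follow from `|sin (βt/2)| ≤ βt/2`, which
cancels `β`. For the bias function it gives `|(η/β) sin + cos| ≤ x + 1 ≤ e^x`; for the velocity
function it gives `(2/β) |sin| ≤ t = 2x/η`, and `x ≤ e^(x - 1)` yields `x e^(-x) ≤ 1/e`.
-/

/-- uniform bounds for the bias function
`r^b(t,λ) = e^{−ηt/2}((η/β) sin(βt/2) + cos(βt/2))` and the velocity function
`φ^b(t,λ) = (2/β) e^{−ηt/2} sin(βt/2)`, `β = √(4λ − η²)`, in the underdamped regime: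
`|r^b| ≤ 1` and `|φ^b| ≤ 2/(eη)`. -/
theorem underdamped_uniform_bounds (η lam : ℝ) (hη : 0 < η) (hlam : η ^ 2 / 4 < lam) :
    ∀ t : ℝ, 0 ≤ t →
      |Real.exp (-(η * t / 2)) *
          ((η / Real.sqrt (4 * lam - η ^ 2)) * Real.sin (Real.sqrt (4 * lam - η ^ 2) * t / 2) +
            Real.cos (Real.sqrt (4 * lam - η ^ 2) * t / 2))| ≤ 1 ∧
      (2 / Real.sqrt (4 * lam - η ^ 2)) * Real.exp (-(η * t / 2)) *
          |Real.sin (Real.sqrt (4 * lam - η ^ 2) * t / 2)| ≤ 2 / (Real.exp 1 * η) := by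
  intro t ht
  have hβ : 0 < Real.sqrt (4 * lam - η ^ 2) := Real.sqrt_pos.mpr (by linarith)
  generalize Real.sqrt (4 * lam - η ^ 2) = β at hβ
  have hs : |Real.sin (β * t / 2)| ≤ β * t / 2 :=
    Real.abs_sin_le_abs.trans_eq (abs_of_nonneg (by positivity))
  constructor
  · have hsum : |η / β * Real.sin (β * t / 2) + Real.cos (β * t / 2)| ≤ η * t / 2 + 1 := by
      calc |η / β * Real.sin (β * t / 2) + Real.cos (β * t / 2)|
          ≤ |η / β * Real.sin (β * t / 2)| + |Real.cos (β * t / 2)| := abs_add_le _ _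
        _ = η / β * |Real.sin (β * t / 2)| + |Real.cos (β * t / 2)| := by
            rw [abs_mul, abs_of_pos (div_pos hη hβ)]
        _ ≤ η / β * (β * t / 2) + 1 := by
            gcongr
            exact Real.abs_cos_le_one _
        _ = η * t / 2 + 1 := by field_simp
    rw [abs_mul, Real.abs_exp]
    calc Real.exp (-(η * t / 2)) * |η / β * Real.sin (β * t / 2) + Real.cos (β * t / 2)|
        ≤ Real.exp (-(η * t / 2)) * Real.exp (η * t / 2) := by
          gcongr
          exact hsum.trans (Real.add_one_le_exp _)
      _ = 1 := by rw [← Real.exp_add, neg_add_cancel, Real.exp_zero]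
  · have hx : η * t / 2 ≤ Real.exp (η * t / 2 - 1) := by
      linarith [Real.add_one_le_exp (η * t / 2 - 1)]
    calc 2 / β * Real.exp (-(η * t / 2)) * |Real.sin (β * t / 2)|
        ≤ 2 / β * Real.exp (-(η * t / 2)) * (β * t / 2) := by gcongr
      _ = 2 / η * (Real.exp (-(η * t / 2)) * (η * t / 2)) := by field_simp
      _ ≤ 2 / η * (Real.exp (-(η * t / 2)) * Real.exp (η * t / 2 - 1)) := by gcongr
      _ = 2 / η * Real.exp (-1) := by
          rw [← Real.exp_add]
          congr 2
          ring
      _ = 2 / (Real.exp 1 * η) := by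
          rw [Real.exp_neg]
          field_simp
end

section
/- Let η > 0, Λ ≥ η²/4 and p > 0, and set γ_c = ((η + 2Λ)/2) · ((p+1)/e)^{p+1} · (η/2)^{p−2} · max(η/2, 1). Then for every α ∈ (0, Λ]: e^{−η/(2α)} (η/(2α) + 1) · (η²/4)^p ≤ γ_c α^p and (1/α) e^{−η/(2α)} · (η²/4)^p ≤ γ_c α^p; that is, the monomial λ ↦ λ^p is a qualification with constant γ_c for the bias and velocity functions of the second-order asymptotical regularization at the critical spectral value λ = η²/4. -/
/-! Put `h = η/2` and `x = h/α`. The function `x ^ q * exp (-x)` has maximum `(q/e) ^ q` on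
`x > 0`; with `q = p + 1` this gives
`exp (-x) * h ^ (p+1) ≤ ((p+1)/e) ^ (p+1) * α ^ (p+1)`. Both claims follow after multiplying by
`h ^ (p-1)` and a factor in `α`: the bias uses `x + 1 = (h + α)/α ≤ (h + Λ)/α` and
`h ≤ max h 1`, the velocity uses `h ≤ (h + Λ) * max h 1`. -/

/-- The maximum of `x ^ q * exp (-x)` is attained at `x = q`; this is `y ≤ exp (y - 1)` at
`y = x / q`, raised to the power `q`. -/
lemma rpow_le_mul_exp {x q : ℝ} (hx : 0 < x) (hq : 0 < q) :
    x ^ q ≤ (q / Real.exp 1) ^ q * Real.exp x := by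
  have h1 : x ≤ q / Real.exp 1 * Real.exp (x / q) := by
    have h2 := Real.add_one_le_exp (x / q - 1)
    rw [sub_add_cancel, Real.exp_sub, div_le_iff₀ hq] at h2
    calc x ≤ _ := h2
      _ = _ := by ring
  calc x ^ q ≤ (q / Real.exp 1 * Real.exp (x / q)) ^ q :=
        Real.rpow_le_rpow hx.le h1 hq.le
    _ = (q / Real.exp 1) ^ q * Real.exp x := by
        rw [Real.mul_rpow (by positivity) (by positivity), ← Real.exp_mul,
          div_mul_cancel₀ _ hq.ne']

/-- at the critical spectral value `λ = η²/4` the monomial `λ ↦ λ^p`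
(`p > 0`) is a qualification with constant
`γ_c = ((η + 2Λ)/2)((p+1)/e)^{p+1}(η/2)^{p−2} max(η/2, 1)` for the bias function
`r^c_α = e^{−η/(2α)}(η/(2α) + 1)` and the velocity function `φ^c_α = (1/α) e^{−η/(2α)}`. -/
theorem critical_qualification (η Λ p : ℝ) (hη : 0 < η) (hΛ : η ^ 2 / 4 ≤ Λ)
    (hp : 0 < p) :
    ∀ α ∈ Set.Ioc (0:ℝ) Λ,
      Real.exp (-(η / (2 * α))) * (η / (2 * α) + 1) * (η ^ 2 / 4) ^ p ≤
        (((η + 2 * Λ) / 2) * ((p + 1) / Real.exp 1) ^ (p + 1) * (η / 2) ^ (p - 2) *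
          max (η / 2) 1) * α ^ p ∧
      (1 / α) * Real.exp (-(η / (2 * α))) * (η ^ 2 / 4) ^ p ≤
        (((η + 2 * Λ) / 2) * ((p + 1) / Real.exp 1) ^ (p + 1) * (η / 2) ^ (p - 2) *
          max (η / 2) 1) * α ^ p := by
  rintro α ⟨hα, hαΛ⟩
  obtain ⟨h, rfl⟩ : ∃ h, η = 2 * h := ⟨η / 2, by ring⟩
  have hh : 0 < h := by linarith
  have e1 : 2 * h / (2 * α) = h / α := by field_simp
  have e2 : 2 * h / 2 = h := by ring
  have e3 : ((2 * h) ^ 2 / 4) ^ p = h ^ p * h ^ p := by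
    rw [← Real.mul_rpow hh.le hh.le]; congr 1; ring
  have e4 : h ^ (p - 2) = h ^ p / h ^ 2 := by
    rw [Real.rpow_sub hh, Real.rpow_two]
  have e5 : (2 * h + 2 * Λ) / 2 = h + Λ := by ring
  rw [e1, e2, e3, e4, e5]
  have key := rpow_le_mul_exp (div_pos hh hα) (show 0 < p + 1 by linarith)
  rw [Real.div_rpow hh.le hα.le, Real.rpow_add_one hh.ne', Real.rpow_add_one hα.ne',
    div_le_iff₀ (by positivity)] at key
  have hK : 0 < ((p + 1) / Real.exp 1) ^ (p + 1) := by positivity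
  have hH : 0 < h ^ p := by positivity
  have hA : 0 < α ^ p := by positivity
  have hM1 : h ≤ max h 1 := le_max_left _ _
  have hM2 : 1 ≤ max h 1 := le_max_right _ _
  have hE : 0 < Real.exp (h / α) := Real.exp_pos _
  rw [Real.exp_neg]
  generalize ((p + 1) / Real.exp 1) ^ (p + 1) = K at *
  generalize h ^ p = H at *
  generalize α ^ p = A at *
  generalize max h 1 = M at *
  generalize Real.exp (h / α) = E at *
  have hΛ0 : 0 < Λ := hα.trans_le hαΛ
  have key' : E⁻¹ * (H * h) ≤ K * (A * α) := by
    rw [inv_mul_le_iff₀ hE]; linarith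
  constructor
  · calc E⁻¹ * (h / α + 1) * (H * H) = (E⁻¹ * (H * h)) * ((h + α) * H / (α * h)) := by
          field_simp
      _ ≤ (K * (A * α)) * ((h + α) * H / (α * h)) := by gcongr
      _ = (h + α) * K * (H / h ^ 2) * h * A := by field_simp
      _ ≤ (h + Λ) * K * (H / h ^ 2) * M * A := by gcongr
  · have hM3 : h ≤ (h + Λ) * M := by nlinarith
    calc 1 / α * E⁻¹ * (H * H) = (E⁻¹ * (H * h)) * (H / (α * h)) := by
          field_simp
      _ ≤ (K * (A * α)) * (H / (α * h)) := by gcongr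
      _ = h * (K * (H / h ^ 2) * A) := by field_simp
      _ ≤ ((h + Λ) * M) * (K * (H / h ^ 2) * A) := by gcongr
      _ = (h + Λ) * K * (H / h ^ 2) * M * A := by ring
end
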